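/- Let K ⊂ ℝⁿ be compact and q_i > 0 on K for i = 1,…,N. If (μ_1,…,μ_N) is any N-tuple of finite Borel measures supported on K satisfying ∫_K q_1 dμ_1 = 1 and ∫_K x^α q_i dμ_i = ∫_K x^α q_1 dμ_1 for all α ∈ ℕⁿ and i = 2,…,N, then Σ_{i=1}^N ∫_K p_i dμ_i ≥ f*. In particular f̂ ≥ f*. -/

import Mathlib

/-!
The moment constraints say that the measures `qᵢ μᵢ` all have the same moments. By
Stone–Weierstrass a finite measure on a compact subset of `ℝⁿ` is determined by its moments, so
they are one measure `ν`, which is a probability measure by the normalization. Hence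
`∑ᵢ ∫ pᵢ dμᵢ = ∑ᵢ ∫ (pᵢ / qᵢ) dν = ∫ f dν`, and the mean of `f` over `K` is at least `f*`.
-/

open MeasureTheory MvPolynomial

section SupportedMeasures

variable {X : Type*} [MeasurableSpace X] {μ : Measure X}

lemma integrable_of_continuousOn_of_isCompact [TopologicalSpace X] [T2Space X]
    [OpensMeasurableSpace X] {E : Type*} [NormedAddCommGroup E] [IsFiniteMeasureOnCompacts μ]
    {K : Set X} (hK : IsCompact K) (hμ : μ Kᶜ = 0) {h : X → E} (hh : ContinuousOn h K) :
    Integrable h μ := by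
  simpa only [IntegrableOn, Measure.restrict_eq_self_of_ae_mem (mem_ae_iff.mpr hμ)] using
    hh.integrableOn_compact (μ := μ) hK

lemma integral_withDensity_ofReal {E : Type*} [NormedAddCommGroup E] [NormedSpace ℝ E] {w : X → ℝ}
    (hw : AEMeasurable w μ) (hw₀ : 0 ≤ᵐ[μ] w) (h : X → E) :
    ∫ x, h x ∂μ.withDensity (fun x => ENNReal.ofReal (w x)) = ∫ x, w x • h x ∂μ := by
  rw [integral_withDensity_eq_integral_toReal_smul₀ hw.ennreal_ofReal (by simp)]
  refine integral_congr_ae ?_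
  filter_upwards [hw₀] with x hx
  rw [ENNReal.toReal_ofReal hx]

lemma csInf_image_le_integral [IsProbabilityMeasure μ] {K : Set X} (hμ : μ Kᶜ = 0) {h : X → ℝ}
    (hh : Integrable h μ) (hbdd : BddBelow (h '' K)) : sInf (h '' K) ≤ ∫ x, h x ∂μ := by
  obtain ⟨x, hxK, hx⟩ := exists_notMem_null_le_integral hh hμ
  exact (csInf_le hbdd ⟨x, not_not.mp hxK, rfl⟩).trans hx

end SupportedMeasures

section MomentDeterminacy

open scoped BoundedContinuousFunction

variable {σ : Type*} {K : Set (σ → ℝ)}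

/-- Restriction of polynomials to a compact set `K`, as an algebra map into the bounded continuous
functions on `K`, where Stone–Weierstrass applies. -/
noncomputable def evalOnCompact (K : Set (σ → ℝ)) [CompactSpace K] :
    MvPolynomial σ ℝ →ₐ[ℝ] (K →ᵇ ℝ) :=
  aeval fun t => .mkOfCompact ⟨fun x => x.1 t, (continuous_apply t).comp continuous_subtype_val⟩

lemma evalOnCompact_apply [CompactSpace K] (P : MvPolynomial σ ℝ) (x : K) :
    evalOnCompact K P x = eval x.1 P := by
  induction P using MvPolynomial.induction_on with
  | C a => simp [evalOnCompact]
  | add P Q hP hQ => simp [hP, hQ]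
  | mul_X P t hP =>
    rw [map_mul, map_mul, BoundedContinuousFunction.mul_apply, hP]
    simp [evalOnCompact]

/-- The polynomial functions on a compact set, as a star subalgebra of the bounded continuous
functions; the involution is trivial over `ℝ`. -/
noncomputable def polynomialFunctionsOnCompact (K : Set (σ → ℝ)) [CompactSpace K] :
    StarSubalgebra ℝ (K →ᵇ ℝ) where
  __ := (evalOnCompact K).range
  star_mem' := by
    rintro _ ⟨P, rfl⟩
    exact ⟨P, BoundedContinuousFunction.ext fun x => by simp⟩

lemma polynomialFunctionsOnCompact_separatesPoints [CompactSpace K] :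
    ((polynomialFunctionsOnCompact K).map
      (BoundedContinuousFunction.toContinuousMapStarₐ ℝ)).SeparatesPoints := by
  intro x y hxy
  obtain ⟨t, ht⟩ := Function.ne_iff.mp (Subtype.coe_injective.ne hxy)
  refine ⟨_, ⟨_, ⟨_, ⟨X t, rfl⟩, rfl⟩, rfl⟩, ?_⟩
  simpa [evalOnCompact_apply] using ht

variable [Fintype σ]

lemma integral_eval_eq_sum_moments {μ : Measure (σ → ℝ)} [IsFiniteMeasureOnCompacts μ]
    (hK : IsCompact K) (hμ : μ Kᶜ = 0) (P : MvPolynomial σ ℝ) :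
    ∫ x, eval x P ∂μ = ∑ α ∈ P.support, coeff α P * ∫ x, ∏ t, x t ^ α t ∂μ := by
  simp_rw [eval_eq' _ P, ← integral_const_mul]
  exact integral_finsetSum _ fun α _ => integrable_of_continuousOn_of_isCompact hK hμ (by fun_prop)

theorem measure_ext_of_forall_moment_eq (hK : IsCompact K) {μ ν : Measure (σ → ℝ)}
    [IsFiniteMeasure μ] [IsFiniteMeasure ν] (hμ : μ Kᶜ = 0) (hν : ν Kᶜ = 0)
    (hmom : ∀ α : σ →₀ ℕ, ∫ x, ∏ t, x t ^ α t ∂μ = ∫ x, ∏ t, x t ^ α t ∂ν) : μ = ν := by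
  have : CompactSpace K := isCompact_iff_compactSpace.mp hK
  have hKm : MeasurableSet K := hK.measurableSet
  have hμK : μ.restrict K = μ := Measure.restrict_eq_self_of_ae_mem (mem_ae_iff.mpr hμ)
  have hνK : ν.restrict K = ν := Measure.restrict_eq_self_of_ae_mem (mem_ae_iff.mpr hν)
  suffices hcomap : μ.comap ((↑) : K → σ → ℝ) = ν.comap (↑) by
    rw [← hμK, ← hνK, ← map_comap_subtype_coe hKm, ← map_comap_subtype_coe hKm, hcomap]
  refine ext_of_forall_mem_subalgebra_integral_eq_of_polish (𝕜 := ℝ)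
    polynomialFunctionsOnCompact_separatesPoints ?_
  rintro _ ⟨P, rfl⟩
  calc ∫ x, evalOnCompact K P x ∂μ.comap (↑)
      = ∫ x, eval x P ∂μ := by
        simp only [evalOnCompact_apply, integral_subtype_comap hKm (eval · P), hμK]
    _ = ∫ x, eval x P ∂ν := by
        simp only [integral_eval_eq_sum_moments hK hμ, integral_eval_eq_sum_moments hK hν, hmom]
    _ = ∫ x, evalOnCompact K P x ∂ν.comap (↑) := by
        simp only [evalOnCompact_apply, integral_subtype_comap hKm (eval · P), hνK]

end MomentDeterminacy

section GMP

variable {ι σ : Type*} [Fintype σ]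

/-- Feasibility of a tuple of measures for the generalized moment problem that relaxes the
minimization of `∑ i, p i / q i` over `K`; the numerators `p i` enter its objective only. The index
`i₀` is the one carrying the normalization. -/
def IsGMPFeasible (K : Set (σ → ℝ)) (q : ι → (σ → ℝ) → ℝ) (i₀ : ι) (μ : ι → Measure (σ → ℝ)) :
    Prop :=
  (∀ i, IsFiniteMeasure (μ i)) ∧
  (∀ i, μ i Kᶜ = 0) ∧
  ∫ x, q i₀ x ∂μ i₀ = 1 ∧
  ∀ i, ∀ α : σ →₀ ℕ,
    ∫ x, (∏ t, x t ^ α t) * q i x ∂μ i = ∫ x, (∏ t, x t ^ α t) * q i₀ x ∂μ i₀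

variable {K : Set (σ → ℝ)} {p q : ι → (σ → ℝ) → ℝ} {i₀ : ι} {μ : ι → Measure (σ → ℝ)}

lemma IsGMPFeasible.exists_isProbabilityMeasure_integral_mul_eq
    (hμ : IsGMPFeasible K q i₀ μ) (hK : IsCompact K)
    (hq : ∀ i, ContinuousOn (q i) K) (hqpos : ∀ i, ∀ x ∈ K, 0 < q i x) :
    ∃ ν : Measure (σ → ℝ), IsProbabilityMeasure ν ∧ ν Kᶜ = 0 ∧
      ∀ (i) (h : (σ → ℝ) → ℝ), ∫ x, h x * q i x ∂μ i = ∫ x, h x ∂ν := by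
  obtain ⟨hfin, hsupp, hmass, hmom⟩ := hμ
  let ρ i := (μ i).withDensity fun x => ENNReal.ofReal (q i x)
  have hqint i : Integrable (q i) (μ i) :=
    integrable_of_continuousOn_of_isCompact hK (hsupp i) (hq i)
  have hρ i (h : (σ → ℝ) → ℝ) : ∫ x, h x ∂ρ i = ∫ x, h x * q i x ∂μ i := by
    have hnonneg : 0 ≤ᵐ[μ i] q i := by
      filter_upwards [mem_ae_iff.mpr (hsupp i)] with x hx using (hqpos i x hx).le
    simpa only [smul_eq_mul, mul_comm] using
      integral_withDensity_ofReal (hqint i).aemeasurable hnonneg h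
  have hρfin i : IsFiniteMeasure (ρ i) := isFiniteMeasure_withDensity_ofReal (hqint i).2
  have hρsupp i : ρ i Kᶜ = 0 := withDensity_absolutelyContinuous _ _ (hsupp i)
  have hρeq i : ρ i = ρ i₀ :=
    measure_ext_of_forall_moment_eq hK (hρsupp i) (hρsupp i₀) fun α => by
      rw [hρ, hρ, hmom i α]
  have hρprob : IsProbabilityMeasure (ρ i₀) :=
    isProbabilityMeasure_iff_real.mpr (by simpa [hmass] using hρ i₀ fun _ => 1)
  exact ⟨ρ i₀, hρprob, hρsupp i₀, fun i h => by rw [← hρ, hρeq]⟩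

lemma IsGMPFeasible.csInf_image_le_sum_integral [Fintype ι] (hμ : IsGMPFeasible K q i₀ μ)
    (hK : IsCompact K) (hp : ∀ i, ContinuousOn (p i) K) (hq : ∀ i, ContinuousOn (q i) K)
    (hqpos : ∀ i, ∀ x ∈ K, 0 < q i x) :
    sInf ((fun x => ∑ i, p i x / q i x) '' K) ≤ ∑ i, ∫ x, p i x ∂μ i := by
  obtain ⟨ν, _, hνsupp, hν⟩ := hμ.exists_isProbabilityMeasure_integral_mul_eq hK hq hqpos
  have hcont i : ContinuousOn (fun x => p i x / q i x) K :=
    (hp i).div (hq i) fun x hx => (hqpos i x hx).ne'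
  have hratio i : ∫ x, p i x / q i x ∂ν = ∫ x, p i x ∂μ i := by
    rw [← hν i]
    refine integral_congr_ae ?_
    filter_upwards [mem_ae_iff.mpr (hμ.2.1 i)] with x hx
    exact div_mul_cancel₀ _ (hqpos i x hx).ne'
  have hsum : ContinuousOn (fun x => ∑ i, p i x / q i x) K :=
    continuousOn_finsetSum _ fun i _ => hcont i
  calc sInf ((fun x => ∑ i, p i x / q i x) '' K)
      ≤ ∫ x, ∑ i, p i x / q i x ∂ν :=
        csInf_image_le_integral hνsupp (integrable_of_continuousOn_of_isCompact hK hνsupp hsum)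
          (hK.bddBelow_image hsum)
    _ = ∑ i, ∫ x, p i x / q i x ∂ν :=
        integral_finsetSum _ fun i _ => integrable_of_continuousOn_of_isCompact hK hνsupp (hcont i)
    _ = ∑ i, ∫ x, p i x ∂μ i := by simp only [hratio]

theorem gmp_feasible_ge_fstar_general [Fintype ι] (hK : IsCompact K)
    (hp : ∀ i, ContinuousOn (p i) K) (hq : ∀ i, ContinuousOn (q i) K)
    (hqpos : ∀ i, ∀ x ∈ K, 0 < q i x) (hμ : IsGMPFeasible K q i₀ μ) :
    sInf ((fun x => ∑ i, p i x / q i x) '' K) ≤ ∑ i, ∫ x, p i x ∂μ i ∧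
      sInf ((fun x => ∑ i, p i x / q i x) '' K) ≤
        sInf {v | ∃ μ, IsGMPFeasible K q i₀ μ ∧ v = ∑ i, ∫ x, p i x ∂μ i} := by
  refine ⟨hμ.csInf_image_le_sum_integral hK hp hq hqpos, le_csInf ⟨_, μ, hμ, rfl⟩ ?_⟩
  rintro _ ⟨ν, hν, rfl⟩
  exact hν.csInf_image_le_sum_integral hK hp hq hqpos

end GMP

/-- **Every feasible solution of the GMP dominates the global minimum.**
Let `K ⊆ ℝⁿ` be compact and `qᵢ > 0` on `K`.  If `(μ₁,…,μ_N)` is any `N`-tuple of finite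
Borel measures supported on `K` satisfying the moment constraints of the generalized
moment problem, then `Σᵢ ∫_K pᵢ dμᵢ ≥ f*`; in particular `f̂ ≥ f*`. -/
theorem gmp_feasible_ge_fstar
    (n N m : ℕ) (hN : 0 < N)
    (g : Fin m → MvPolynomial (Fin n) ℝ)
    (K : Set (Fin n → ℝ))
    (hK : K = {x | ∀ j, 0 ≤ eval x (g j)})
    (hKcpt : IsCompact K)
    (p q : Fin N → MvPolynomial (Fin n) ℝ)
    (hqpos : ∀ i, ∀ x ∈ K, 0 < eval x (q i))
    (f : (Fin n → ℝ) → ℝ)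
    (hf : f = fun x => ∑ i, eval x (p i) / eval x (q i))
    (fstar : ℝ)
    (hfstar : fstar = sInf (f '' K))
    (fhat : ℝ)
    (hfhat : fhat = sInf {v : ℝ |
      ∃ μ : Fin N → Measure (Fin n → ℝ),
        (∀ i, IsFiniteMeasure (μ i)) ∧
        (∀ i, μ i Kᶜ = 0) ∧
        (∫ x, eval x (q ⟨0, hN⟩) ∂(μ ⟨0, hN⟩)) = 1 ∧
        (∀ i, ∀ α : Fin n →₀ ℕ,
          ∫ x, (∏ t, x t ^ α t) * eval x (q i) ∂(μ i)
            = ∫ x, (∏ t, x t ^ α t) * eval x (q ⟨0, hN⟩) ∂(μ ⟨0, hN⟩)) ∧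
        v = ∑ i, ∫ x, eval x (p i) ∂(μ i)})
    (μ : Fin N → Measure (Fin n → ℝ))
    (hfin : ∀ i, IsFiniteMeasure (μ i))
    (hsupp : ∀ i, μ i Kᶜ = 0)
    (hmass : (∫ x, eval x (q ⟨0, hN⟩) ∂(μ ⟨0, hN⟩)) = 1)
    (hmom : ∀ i, ∀ α : Fin n →₀ ℕ,
      ∫ x, (∏ t, x t ^ α t) * eval x (q i) ∂(μ i)
        = ∫ x, (∏ t, x t ^ α t) * eval x (q ⟨0, hN⟩) ∂(μ ⟨0, hN⟩)) :
    fstar ≤ ∑ i, ∫ x, eval x (p i) ∂(μ i) ∧ fstar ≤ fhat := by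
  subst hf hfstar hfhat
  simpa only [IsGMPFeasible, and_assoc] using
    gmp_feasible_ge_fstar_general hKcpt (fun i => (continuous_eval (p i)).continuousOn)
      (fun i => (continuous_eval (q i)).continuousOn) hqpos ⟨hfin, hsupp, hmass, hmom⟩
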